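/- Proposition (stochastic-transition counterexample to identifiability of partial return): Consider the MDP with start state s_0 and absorbing states s_safe, s_win, s_lose (all further reward 0); from s_0, action a_safe deterministically reaches s_safe with reward 0, and action a_risk reaches s_win with probability 0.5 and reward r_win, and s_lose with probability 0.5 and reward −10. Let r be the reward with r_win = 11 and r̂ the reward with r_win = 9. Then: (i) a_risk is the unique optimal action at s_0 under r while a_safe is the unique optimal action at s_0 under r̂, so Π*_r ≠ Π*_{r̂}; and (ii) the noiseless partial-return preference relation over the three length-1 segments is identical under r and r̂, namely (s_0, a_risk, s_win) ≻ (s_0, a_safe, s_safe) ≻ (s_0, a_risk, s_lose). -/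

import Mathlib

open scoped BigOperators

/-- The dynamics of a finite MDP: a transition kernel `T` on finite state and action spaces. -/
structure MDP (S A : Type) [Fintype S] [Fintype A] where
  T : S → A → S → ℝ
  T_nonneg : ∀ s a s', 0 ≤ T s a s'
  T_sum_one : ∀ s a, ∑ s', T s a s' = 1

/-- A (stochastic, memoryless) policy `π : S → Δ(A)`. -/
structure Policy (S A : Type) [Fintype A] where
  p : S → A → ℝ
  nonneg : ∀ s a, 0 ≤ p s a
  sum_one : ∀ s, ∑ a, p s a = 1

variable {S A : Type} [Fintype S] [Fintype A]

/-- Expected reward received at time `t` when starting from state `s` and following `π`. -/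
noncomputable def expReward (M : MDP S A) (π : Policy S A) (r : S → A → S → ℝ) :
    ℕ → S → ℝ
  | 0, s => ∑ a, ∑ s', π.p s a * M.T s a s' * r s a s'
  | t + 1, s => ∑ a, ∑ s', π.p s a * M.T s a s' * expReward M π r t s'

/-- `V^π_{r,γ}`: the expected discounted return of policy `π` from state `s`. -/
noncomputable def Vpi (M : MDP S A) (π : Policy S A) (r : S → A → S → ℝ) (γ : ℝ) (s : S) : ℝ :=
  ∑' t : ℕ, γ ^ t * expReward M π r t s

/-- `Q^π_{r,γ}`: the expected discounted return from `s` taking `a` first, following `π` after. -/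
noncomputable def Qpi (M : MDP S A) (π : Policy S A) (r : S → A → S → ℝ) (γ : ℝ)
    (s : S) (a : A) : ℝ :=
  ∑ s', M.T s a s' * (r s a s' + γ * Vpi M π r γ s')

/-- The optimal state-value function `V*_{r,γ}`. -/
noncomputable def Vstar (M : MDP S A) (r : S → A → S → ℝ) (γ : ℝ) (s : S) : ℝ :=
  ⨆ π : Policy S A, Vpi M π r γ s

/-- The optimal state-action value function `Q*_{r,γ}`. -/
noncomputable def Qstar (M : MDP S A) (r : S → A → S → ℝ) (γ : ℝ) (s : S) (a : A) : ℝ :=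
  ⨆ π : Policy S A, Qpi M π r γ s a

/-- `Π*_{(r,γ)}`: the set of optimal policies, those attaining `V*` at every state. -/
def Pistar (M : MDP S A) (r : S → A → S → ℝ) (γ : ℝ) : Set (Policy S A) :=
  {π | ∀ s, Vpi M π r γ s = Vstar M r γ s}

/-- A segment of length `n`: states `s_0, …, s_n` and actions `a_0, …, a_{n-1}`. -/
abbrev Segment (S A : Type) (n : ℕ) := (Fin (n + 1) → S) × (Fin n → A)

/-- Discounted partial return of a segment: `Σ_{t<n} γ^t r(s_t, a_t, s_{t+1})`. -/
noncomputable def partialReturn {S A : Type} (r : S → A → S → ℝ) (γ : ℝ) {n : ℕ}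
    (σ : Segment S A n) : ℝ :=
  ∑ t : Fin n, γ ^ (t : ℕ) * r (σ.1 t.castSucc) (σ.2 t) (σ.1 t.succ)

/-- Regret of a segment: `Σ_{t<n} γ^t (V*(s_t) − Q*(s_t,a_t))`. -/
noncomputable def segRegret (M : MDP S A) (r : S → A → S → ℝ) (γ : ℝ) {n : ℕ}
    (σ : Segment S A n) : ℝ :=
  ∑ t : Fin n, γ ^ (t : ℕ) *
    (Vstar M r γ (σ.1 t.castSucc) - Qstar M r γ (σ.1 t.castSucc) (σ.2 t))

/-- The logistic function. -/
noncomputable def logistic (x : ℝ) : ℝ := 1 / (1 + Real.exp (-x))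

namespace RiskMDP

/-- States: `0 = s₀`, `1 = s_safe`, `2 = s_win`, `3 = s_lose`. -/
abbrev St := Fin 4
/-- Actions: `0 = a_safe`, `1 = a_risk`. -/
abbrev Ac := Fin 2

/-- From `s₀`, `a_safe` deterministically reaches `s_safe`; `a_risk` reaches `s_win` with
probability `1/2` and `s_lose` with probability `1/2`.  `s_safe`, `s_win`, `s_lose` are
absorbing. -/
noncomputable def T (s : St) (a : Ac) (s' : St) : ℝ :=
  if s = 0 then
    if a = 0 then (if s' = 1 then 1 else 0)
    else (if s' = 2 then 1 / 2 else if s' = 3 then 1 / 2 else 0)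
  else (if s' = s then 1 else 0)

noncomputable def M : MDP St Ac where
  T := T
  T_nonneg := by
    intro s a s'
    unfold T
    split_ifs <;> norm_num
  T_sum_one := by
    intro s a
    fin_cases s <;> fin_cases a <;>
      simp +decide [T, Fin.sum_univ_four] <;> norm_num

/-- Reward: from `s₀`, `a_risk` yields `r_win` at `s_win` and `−10` at `s_lose`; everything
else (including `a_safe` and all transitions from absorbing states) yields `0`. -/
noncomputable def rew (rwin : ℝ) : St → Ac → St → ℝ := fun s a s' =>
  if s = 0 ∧ a = 1 then (if s' = 2 then rwin else if s' = 3 then -10 else 0) else 0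

end RiskMDP

/-! Every transition enters an absorbing state, so only the first reward counts and an optimal
policy maximizes the expected immediate reward. For `a_risk` this is the average `(r_win - 10) / 2`
of two outcomes, which changes sign at `r_win = 10`, whereas a preference between single segments
sees each outcome separately and only detects the sign of `r_win`. -/

namespace Policy

theorem sum_mul_le {S : Type} (π : Policy S A) (s : S) {f : A → ℝ} {c : ℝ} (hf : ∀ a, f a ≤ c) :
    ∑ a, π.p s a * f a ≤ c :=
  calc
    ∑ a, π.p s a * f a ≤ ∑ a, π.p s a * c :=
      Finset.sum_le_sum fun a _ => mul_le_mul_of_nonneg_left (hf a) (π.nonneg s a)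
    _ = c := by rw [← Finset.sum_mul, π.sum_one, one_mul]

/-- The deterministic policy that plays the action `f s` in every state `s`. -/
noncomputable def deterministic {S : Type} [DecidableEq A] (f : S → A) : Policy S A where
  p s := Pi.single (f s) 1
  nonneg s a := (Pi.single_nonneg.2 zero_le_one : (0 : A → ℝ) ≤ Pi.single (f s) 1) a
  sum_one s := Fintype.sum_pi_single' (f s) 1

theorem sum_deterministic_mul {S : Type} [DecidableEq A] (f : S → A) (s : S) (g : A → ℝ) :
    ∑ a, (deterministic f).p s a * g a = g (f s) := by
  simp [deterministic, Pi.single_apply]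

instance {S : Type} [Nonempty A] : Nonempty (Policy S A) := by
  classical exact ⟨deterministic fun _ => Classical.arbitrary A⟩

end Policy

namespace MDP

variable {M : MDP S A} {r : S → A → S → ℝ} {s : S} {a : A}

/-- A state is absorbing if every action returns to it (almost surely) with reward `0`. -/
def IsAbsorbing (M : MDP S A) (r : S → A → S → ℝ) (s : S) : Prop :=
  ∀ a, M.T s a s = 1 ∧ r s a s = 0

/-- Taking `a` in `s` ends the decision problem: every state reached with positive probability is
absorbing. -/
def EntersAbsorbing (M : MDP S A) (r : S → A → S → ℝ) (s : S) (a : A) : Prop :=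
  ∀ s', M.T s a s' ≠ 0 → M.IsAbsorbing r s'

/-- The expected immediate reward of taking `a` in `s`. -/
noncomputable def meanReward (M : MDP S A) (r : S → A → S → ℝ) (s : S) (a : A) : ℝ :=
  ∑ s', M.T s a s' * r s a s'

theorem expReward_zero (π : Policy S A) :
    expReward M π r 0 s = ∑ a, π.p s a * M.meanReward r s a := by
  simp only [expReward, meanReward, Finset.mul_sum, mul_assoc]

theorem expReward_succ (π : Policy S A) (t : ℕ) :
    expReward M π r (t + 1) s = ∑ a, π.p s a * ∑ s', M.T s a s' * expReward M π r t s' := by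
  simp only [expReward, Finset.mul_sum, mul_assoc]

theorem T_eq_zero_of_T_self_eq_one (h : M.T s a s = 1) {s' : S} (hs' : s' ≠ s) :
    M.T s a s' = 0 := by
  classical
  have hsum : ∑ x ∈ Finset.univ.erase s, M.T s a x = 0 := by
    linarith [Finset.add_sum_erase Finset.univ (M.T s a) (Finset.mem_univ s), M.T_sum_one s a]
  exact (Finset.sum_eq_zero_iff_of_nonneg fun x _ => M.T_nonneg s a x).1 hsum s' (by simp [hs'])

namespace IsAbsorbing

theorem sum_T_mul (h : M.IsAbsorbing r s) (a : A) (f : S → ℝ) :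
    ∑ s', M.T s a s' * f s' = f s := by
  rw [Fintype.sum_eq_single s fun s' hs' => by
    rw [T_eq_zero_of_T_self_eq_one (h a).1 hs', zero_mul], (h a).1, one_mul]

theorem meanReward_eq_zero (h : M.IsAbsorbing r s) (a : A) : M.meanReward r s a = 0 :=
  (h.sum_T_mul a (r s a)).trans (h a).2

theorem expReward_eq_zero (h : M.IsAbsorbing r s) (π : Policy S A) (t : ℕ) :
    expReward M π r t s = 0 := by
  induction t with
  | zero => simp only [expReward_zero, h.meanReward_eq_zero, mul_zero, Finset.sum_const_zero]
  | succ t ih => simp only [expReward_succ, h.sum_T_mul, ih, mul_zero, Finset.sum_const_zero]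

theorem Vpi_eq_zero (h : M.IsAbsorbing r s) (π : Policy S A) (γ : ℝ) : Vpi M π r γ s = 0 := by
  simp only [Vpi, h.expReward_eq_zero, mul_zero, tsum_zero]

end IsAbsorbing

theorem EntersAbsorbing.sum_T_mul_eq_zero (h : M.EntersAbsorbing r s a) {f : S → ℝ}
    (hf : ∀ s', M.IsAbsorbing r s' → f s' = 0) : ∑ s', M.T s a s' * f s' = 0 :=
  Finset.sum_eq_zero fun s' _ => by
    by_cases hT : M.T s a s' = 0
    · rw [hT, zero_mul]
    · rw [hf s' (h s' hT), mul_zero]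

theorem Qpi_eq_meanReward (h : M.EntersAbsorbing r s a) (π : Policy S A) (γ : ℝ) :
    Qpi M π r γ s a = M.meanReward r s a := by
  have hfuture : ∑ s', M.T s a s' * (γ * Vpi M π r γ s') = 0 :=
    h.sum_T_mul_eq_zero fun s' hs' => by rw [hs'.Vpi_eq_zero, mul_zero]
  simp only [Qpi, mul_add, Finset.sum_add_distrib, hfuture, add_zero, meanReward]

theorem Qstar_eq_meanReward (h : M.EntersAbsorbing r s a) (γ : ℝ) :
    Qstar M r γ s a = M.meanReward r s a := by
  have : Nonempty A := ⟨a⟩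
  simp only [Qstar, Qpi_eq_meanReward h, ciSup_const]

theorem Vpi_eq_sum_meanReward (h : ∀ a, M.EntersAbsorbing r s a) (π : Policy S A) (γ : ℝ) :
    Vpi M π r γ s = ∑ a, π.p s a * M.meanReward r s a := by
  have hlater (t : ℕ) : expReward M π r (t + 1) s = 0 := by
    rw [expReward_succ]
    refine Finset.sum_eq_zero fun a _ => ?_
    rw [(h a).sum_T_mul_eq_zero fun s' hs' => hs'.expReward_eq_zero π t, mul_zero]
  rw [Vpi, tsum_eq_single 0, pow_zero, one_mul, expReward_zero]
  intro t ht
  obtain ⟨n, rfl⟩ := Nat.exists_eq_succ_of_ne_zero ht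
  rw [hlater, mul_zero]

theorem Vpi_deterministic [DecidableEq A] (h : ∀ a, M.EntersAbsorbing r s a) (f : S → A) (γ : ℝ) :
    Vpi M (.deterministic f) r γ s = M.meanReward r s (f s) := by
  rw [Vpi_eq_sum_meanReward h, Policy.sum_deterministic_mul]

theorem Vstar_eq_meanReward (h : ∀ a, M.EntersAbsorbing r s a)
    (ha : ∀ b, M.meanReward r s b ≤ M.meanReward r s a) (γ : ℝ) :
    Vstar M r γ s = M.meanReward r s a := by
  classical
  refine IsGreatest.csSup_eq ⟨⟨.deterministic fun _ => a, Vpi_deterministic h _ γ⟩, ?_⟩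
  rintro _ ⟨π, rfl⟩
  exact (Vpi_eq_sum_meanReward h π γ).trans_le (π.sum_mul_le s ha)

theorem deterministic_mem_Pistar_iff [DecidableEq A] (h : ∀ s a, M.EntersAbsorbing r s a)
    (f : S → A) (γ : ℝ) :
    .deterministic f ∈ Pistar M r γ ↔
      ∀ s a, M.meanReward r s a ≤ M.meanReward r s (f s) := by
  refine forall_congr' fun s => ?_
  rw [Vpi_deterministic (h s)]
  refine ⟨fun hopt a => ?_, fun hmax => (Vstar_eq_meanReward (h s) hmax γ).symm⟩
  have : Nonempty A := ⟨a⟩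
  obtain ⟨b, hb⟩ := Finite.exists_max (M.meanReward r s)
  rw [hopt, Vstar_eq_meanReward (h s) hb]
  exact hb a

end MDP

namespace RiskMDP

theorem isAbsorbing_of_ne_zero (w : ℝ) {s : St} (hs : s ≠ 0) : M.IsAbsorbing (rew w) s := by
  simp [MDP.IsAbsorbing, M, T, rew, hs]

theorem T_to_start (s : St) (a : Ac) : M.T s a 0 = 0 := by
  fin_cases s <;> fin_cases a <;> simp [M, T]

theorem entersAbsorbing (w : ℝ) (s : St) (a : Ac) : M.EntersAbsorbing (rew w) s a := by
  intro s' hT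
  refine isAbsorbing_of_ne_zero w ?_
  rintro rfl
  exact hT (T_to_start s a)

theorem meanReward_safe (w : ℝ) : M.meanReward (rew w) 0 0 = 0 := by
  simp [MDP.meanReward, rew]

theorem meanReward_risk (w : ℝ) : M.meanReward (rew w) 0 1 = (w - 10) / 2 :=
  calc
    M.meanReward (rew w) 0 1 = 1 / 2 * w + 1 / 2 * -10 := by
      simp [MDP.meanReward, M, T, rew, Fin.sum_univ_four]
    _ = (w - 10) / 2 := by ring

theorem Qstar_safe (w γ : ℝ) : Qstar M (rew w) γ 0 0 = 0 := by
  rw [MDP.Qstar_eq_meanReward (entersAbsorbing w 0 0), meanReward_safe]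

theorem Qstar_risk (w γ : ℝ) : Qstar M (rew w) γ 0 1 = (w - 10) / 2 := by
  rw [MDP.Qstar_eq_meanReward (entersAbsorbing w 0 1), meanReward_risk]

theorem Vstar_start_of_ten_le {w : ℝ} (hw : 10 ≤ w) (γ : ℝ) :
    Vstar M (rew w) γ 0 = (w - 10) / 2 := by
  rw [MDP.Vstar_eq_meanReward (a := 1) (entersAbsorbing w 0), meanReward_risk]
  rw [Fin.forall_fin_two, meanReward_safe, meanReward_risk]
  exact ⟨by linarith, le_rfl⟩

theorem Vstar_start_of_le_ten {w : ℝ} (hw : w ≤ 10) (γ : ℝ) : Vstar M (rew w) γ 0 = 0 := by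
  rw [MDP.Vstar_eq_meanReward (a := 0) (entersAbsorbing w 0), meanReward_safe]
  rw [Fin.forall_fin_two, meanReward_safe, meanReward_risk]
  exact ⟨le_rfl, by linarith⟩

theorem always_risk_mem_Pistar_iff (w γ : ℝ) :
    .deterministic (fun _ => 1) ∈ Pistar M (rew w) γ ↔ 10 ≤ w := by
  rw [MDP.deterministic_mem_Pistar_iff (entersAbsorbing w)]
  constructor
  · intro hmax
    have hstart := hmax 0 0
    rw [meanReward_safe, meanReward_risk] at hstart
    linarith
  · intro hw s
    obtain rfl | hs := eq_or_ne s 0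
    · rw [Fin.forall_fin_two, meanReward_safe, meanReward_risk]
      exact ⟨by linarith, le_rfl⟩
    · simp only [(isAbsorbing_of_ne_zero w hs).meanReward_eq_zero, le_refl, implies_true]

theorem rew_win_gt_safe_gt_lose {w : ℝ} (hw : 0 < w) :
    rew w 0 1 2 > rew w 0 0 1 ∧ rew w 0 0 1 > rew w 0 1 3 := by
  simp [rew, hw]

theorem stochastic_counterexample_to_partial_return_general (γ : ℝ) {w v : ℝ} (hw : 10 < w)
    (hv₀ : 0 < v) (hv : v < 10) :
    (Qstar M (rew w) γ 0 1 = Vstar M (rew w) γ 0 ∧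
      Qstar M (rew w) γ 0 0 < Vstar M (rew w) γ 0) ∧
    (Qstar M (rew v) γ 0 0 = Vstar M (rew v) γ 0 ∧
      Qstar M (rew v) γ 0 1 < Vstar M (rew v) γ 0) ∧
    Pistar M (rew w) γ ≠ Pistar M (rew v) γ ∧
    (rew w 0 1 2 > rew w 0 0 1 ∧ rew w 0 0 1 > rew w 0 1 3) ∧
    (rew v 0 1 2 > rew v 0 0 1 ∧ rew v 0 0 1 > rew v 0 1 3) := by
  have hPistar : Pistar M (rew w) γ ≠ Pistar M (rew v) γ := fun heq =>
    hv.not_ge <| (always_risk_mem_Pistar_iff v γ).1 <|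
      heq ▸ (always_risk_mem_Pistar_iff w γ).2 hw.le
  rw [Qstar_risk, Qstar_safe, Vstar_start_of_ten_le hw.le, Qstar_risk, Qstar_safe,
    Vstar_start_of_le_ten hv.le]
  exact ⟨⟨rfl, by linarith⟩, ⟨rfl, by linarith⟩, hPistar,
    rew_win_gt_safe_gt_lose (by linarith), rew_win_gt_safe_gt_lose hv₀⟩

/-- **Stochastic-transition counterexample to identifiability of partial return.**
With `r = rew 11` and `r̂ = rew 9` (undiscounted): (i) `a_risk` is the unique optimal action
at `s₀` under `r`, while `a_safe` is the unique optimal action at `s₀` under `r̂`, so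
`Π*_r ≠ Π*_r̂`; and (ii) the noiseless partial-return preference relation over the three
length-1 segments is identical under `r` and `r̂`:
`(s₀, a_risk, s_win) ≻ (s₀, a_safe, s_safe) ≻ (s₀, a_risk, s_lose)`. -/
theorem stochastic_counterexample_to_partial_return :
    (Qstar M (rew 11) 1 0 1 = Vstar M (rew 11) 1 0 ∧
      Qstar M (rew 11) 1 0 0 < Vstar M (rew 11) 1 0) ∧
    (Qstar M (rew 9) 1 0 0 = Vstar M (rew 9) 1 0 ∧
      Qstar M (rew 9) 1 0 1 < Vstar M (rew 9) 1 0) ∧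
    Pistar M (rew 11) 1 ≠ Pistar M (rew 9) 1 ∧
    (rew 11 0 1 2 > rew 11 0 0 1 ∧ rew 11 0 0 1 > rew 11 0 1 3) ∧
    (rew 9 0 1 2 > rew 9 0 0 1 ∧ rew 9 0 0 1 > rew 9 0 1 3) :=
  stochastic_counterexample_to_partial_return_general 1 (by norm_num) (by norm_num) (by norm_num)

end RiskMDP
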